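/- For every real ε > 0 there exists k₀ = k₀(ε) such that for every integer k ≥ k₀ and every real r with 0 < r < 2^(k-1)·ln 2 − (ln 2)/2 − 1/2 − ε, the function g_r satisfies: g_r(α) < g_r(1/2) for every α ∈ [0,1] with α ≠ 1/2, and g_r''(1/2) < 0. -/

import Mathlib

/-- The correlation function for NAE `k`-SAT:
`f_N(α) = 1 - 2^(2-k) + 2^(1-k) (α^k + (1-α)^k)`. -/
noncomputable def fN (k : ℕ) (α : ℝ) : ℝ :=
  1 - (2 : ℝ) ^ ((2 : ℤ) - k) + (2 : ℝ) ^ ((1 : ℤ) - k) * (α ^ k + (1 - α) ^ k)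

/-- `g_r(α) = f_N(α)^r / (α^α (1-α)^(1-α))`, with the `0^0 = 1` convention of
`Real.rpow` at the endpoints. -/
noncomputable def gr (k : ℕ) (r : ℝ) (α : ℝ) : ℝ :=
  fN k α ^ r / (α ^ α * (1 - α) ^ (1 - α))

/-!
On `[0, 1]` we have `g_r = exp (r log f_N + H)` with `H` the binary entropy. Since `f_N` is minimal
at `1/2`, it suffices to treat the largest admissible `r`. Put `q = 2 ^ (1 - k)`, so that
`f_N(1/2) = (1 - q) ^ 2` and `f_N(0) = 1 - q`.

Away from the endpoints `r (log f_N(α) - log f_N(1/2))` is exponentially small in `k` compared with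
`(1 - 2α) ^ 2`, whereas `H` loses at least `(1 - 2α) ^ 2 / 6` from its maximum `log 2`. Near `0`
(and near `1` by symmetry) the ratio `f_N(α) / f_N(1/2)` is about `1 / (1 - q)`, which alone nearly
uses up the whole `log 2`, so the two sides must be compared to order `q`: linearising `log` at
`f_N(0)` turns the loss of `f_N` into a line of slope about `k log 2` in `α`, and the Fenchel bound
`H(α) ≤ c α + exp (-c)` with `c = k log 2` shows that the entropy exceeds that line by at most
`q / 2`.
-/

open Filter Real Set Topology

section Entropy

lemma negMulLog_le_mul_add_exp_neg_sub_self {x : ℝ} (hx : 0 ≤ x) (c : ℝ) :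
    negMulLog x ≤ x * c + exp (-c) - x := by
  have scaled : negMulLog (x * exp c) ≤ 1 - x * exp c :=
    negMulLog_le_one_sub_self (by positivity)
  rw [negMulLog_mul, negMulLog, negMulLog, log_exp] at scaled
  have cancel : exp (-c) * exp c = 1 := by rw [← exp_add]; simp
  refine le_of_mul_le_mul_right ?_ (exp_pos c)
  rw [negMulLog]
  linarith

lemma binEntropy_le_mul_add_exp_neg {p : ℝ} (hp : p ∈ Icc (0 : ℝ) 1) (c : ℝ) :
    binEntropy p ≤ p * c + exp (-c) := by
  rw [binEntropy_eq_negMulLog_add_negMulLog_one_sub]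
  linarith [negMulLog_le_mul_add_exp_neg_sub_self hp.1 c,
    negMulLog_le_one_sub_self (sub_nonneg.2 hp.2)]

/-- Bounding `log √x` instead of `log x` is what produces the quadratic gain. -/
lemma negMulLog_le_one_sub_self_sub_sqrt_sub_one_sq {x : ℝ} (hx : 0 ≤ x) :
    negMulLog x ≤ 1 - x - (√x - 1) ^ 2 := by
  have hsqrt : negMulLog √x ≤ 1 - √x := negMulLog_le_one_sub_self (sqrt_nonneg x)
  calc negMulLog x = 2 * √x * negMulLog √x := by
        nth_rw 1 [← mul_self_sqrt hx]
        rw [negMulLog_mul]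
        ring
    _ ≤ 2 * √x * (1 - √x) := by gcongr
    _ = 1 - x - (√x - 1) ^ 2 := by linear_combination -sq_sqrt hx

lemma sq_sub_one_le_six_mul_sqrt_sub_one_sq {x : ℝ} (hx : x ∈ Icc (0 : ℝ) 2) :
    (x - 1) ^ 2 ≤ 6 * (√x - 1) ^ 2 := by
  have hsq : √x ^ 2 = x := sq_sqrt hx.1
  have hsqrt : √x ≤ 36 / 25 := sqrt_le_iff.2 ⟨by norm_num, by linarith [hx.2]⟩
  have hfactor : (√x + 1) ^ 2 ≤ 6 := by nlinarith [sqrt_nonneg x]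
  calc (x - 1) ^ 2 = (√x + 1) ^ 2 * (√x - 1) ^ 2 := by nth_rw 1 [← hsq]; ring
    _ ≤ 6 * (√x - 1) ^ 2 := by gcongr

lemma binEntropy_le_log_two_sub_sq {p : ℝ} (hp : p ∈ Icc (0 : ℝ) 1) :
    binEntropy p ≤ log 2 - (1 - 2 * p) ^ 2 / 6 := by
  have hterm : ∀ t ∈ Icc (0 : ℝ) 1,
      negMulLog t ≤ t * log 2 + (1 - 2 * t - (1 - 2 * t) ^ 2 / 6) / 2 := fun t ht ↦ by
    have hrescale : negMulLog t = negMulLog (2 * t) / 2 + t * log 2 := by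
      rw [negMulLog_mul, negMulLog, negMulLog]
      ring
    linarith [negMulLog_le_one_sub_self_sub_sqrt_sub_one_sq (x := 2 * t) (by linarith [ht.1]),
      sq_sub_one_le_six_mul_sqrt_sub_one_sq (x := 2 * t) ⟨by linarith [ht.1], by linarith [ht.2]⟩]
  rw [binEntropy_eq_negMulLog_add_negMulLog_one_sub]
  linarith [hterm p hp, hterm (1 - p) ⟨by linarith [hp.2], by linarith [hp.1]⟩]

end Entropy

section Logarithm

lemma log_le_log_add_sub_div {x y : ℝ} (hx : 0 < x) (hy : 0 < y) :
    log y ≤ log x + (y - x) / x := by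
  have h := log_le_sub_one_of_pos (div_pos hy hx)
  rw [log_div hy.ne' hx.ne'] at h
  rw [sub_div, div_self hx.ne']
  linarith

lemma neg_log_one_sub_le {x : ℝ} (hx₀ : 0 ≤ x) (hx : x ≤ 1 / 2) :
    -log (1 - x) ≤ x + x ^ 2 / 2 + 2 * x ^ 3 := by
  have taylor := abs_log_sub_add_sum_range_le (x := x) (by rw [abs_of_nonneg hx₀]; linarith) 2
  simp only [Finset.sum_range_succ, Finset.sum_range_zero, abs_of_nonneg hx₀, Nat.cast_zero,
    Nat.cast_one, zero_add, pow_one, div_one, one_add_one_eq_two, Nat.reduceAdd] at taylor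
  have remainder : x ^ 3 / (1 - x) ≤ 2 * x ^ 3 := by
    rw [div_le_iff₀ (by linarith)]
    nlinarith [pow_nonneg hx₀ 3]
  linarith [neg_abs_le (x + x ^ 2 / 2 + log (1 - x))]

end Logarithm

section PowSum

/-- The power sum `α ^ k + (1 - α) ^ k` through which `fN k` depends on `α`. -/
noncomputable def powSum (k : ℕ) (α : ℝ) : ℝ :=
  α ^ k + (1 - α) ^ k

/-- The probability `2 ^ (1 - k)` that a uniformly random assignment violates a given
not-all-equal clause on `k` variables, written without negative exponents. -/
noncomputable def violationProb (k : ℕ) : ℝ :=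
  2 * (1 / 2) ^ k

variable {k : ℕ} {α : ℝ}

lemma powSum_one_sub (k : ℕ) (α : ℝ) : powSum k (1 - α) = powSum k α := by
  rw [powSum, powSum, sub_sub_cancel, add_comm]

lemma violationProb_pos (k : ℕ) : 0 < violationProb k := by
  rw [violationProb]
  positivity

lemma violationProb_le_half (hk : 2 ≤ k) : violationProb k ≤ 1 / 2 := by
  have : (1 / 2 : ℝ) ^ k ≤ (1 / 2) ^ 2 := pow_le_pow_of_le_one (by norm_num) (by norm_num) hk
  rw [violationProb]
  linarith

lemma two_zpow_one_sub (k : ℕ) : (2 : ℝ) ^ ((1 : ℤ) - k) = violationProb k := by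
  rw [violationProb, zpow_sub₀ two_ne_zero, zpow_one, zpow_natCast, one_div_pow, mul_one_div]

lemma two_zpow_two_sub (k : ℕ) : (2 : ℝ) ^ ((2 : ℤ) - k) = 2 * violationProb k := by
  rw [← two_zpow_one_sub, ← zpow_one_add₀ two_ne_zero]
  congr 1
  ring

lemma two_zpow_sub_one (k : ℕ) : (2 : ℝ) ^ ((k : ℤ) - 1) = (violationProb k)⁻¹ := by
  rw [← two_zpow_one_sub, ← zpow_neg, neg_sub]

lemma tendsto_violationProb : Tendsto violationProb atTop (𝓝 0) := by
  simpa only [violationProb, mul_zero] using! (tendsto_pow_atTop_nhds_zero_of_lt_one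
    (r := (1 / 2 : ℝ)) (by norm_num) (by norm_num)).const_mul 2

lemma powSum_half (k : ℕ) : powSum k (1 / 2) = violationProb k := by
  rw [powSum, violationProb, sub_half, two_mul]

lemma powSum_le_one (hk : k ≠ 0) (hα : α ∈ Icc (0 : ℝ) 1) : powSum k α ≤ 1 := by
  have h₁ : α ^ k ≤ α := pow_le_of_le_one hα.1 hα.2 hk
  have h₂ : (1 - α) ^ k ≤ 1 - α := pow_le_of_le_one (sub_nonneg.2 hα.2) (by linarith [hα.1]) hk
  rw [powSum]
  linarith

lemma violationProb_le_powSum (k : ℕ) (hα : α ∈ Icc (0 : ℝ) 1) :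
    violationProb k ≤ powSum k α := by
  have convex : (1 / 2 * α + 1 / 2 * (1 - α)) ^ k ≤ 1 / 2 * α ^ k + 1 / 2 * (1 - α) ^ k :=
    (convexOn_pow k).2 hα.1 (sub_nonneg.2 hα.2) (by norm_num) (by norm_num) (by norm_num)
  rw [← mul_add, add_sub_cancel, mul_one] at convex
  rw [violationProb, powSum]
  linarith

lemma powSum_le_inv_one_add_add_sq (hk : 2 ≤ k) (hα : α ∈ Icc (0 : ℝ) 1) :
    powSum k α ≤ (1 + k * α)⁻¹ + α ^ 2 := by
  have hsmall : α ^ k ≤ α ^ 2 := pow_le_pow_of_le_one hα.1 hα.2 hk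
  have bernoulli : 1 + k * α ≤ (1 + α) ^ k := one_add_mul_le_pow (by linarith [hα.1]) k
  have hpos : 0 < 1 + k * α := by have := hα.1; positivity
  have hlarge : (1 - α) ^ k ≤ (1 + k * α)⁻¹ := by
    rw [← one_div, le_div_iff₀ hpos]
    calc (1 - α) ^ k * (1 + k * α) ≤ (1 - α) ^ k * (1 + α) ^ k := by
          gcongr
          exact pow_nonneg (sub_nonneg.2 hα.2) k
      _ = (1 - α ^ 2) ^ k := by rw [← mul_pow]; ring
      _ ≤ 1 := pow_le_one₀ (by nlinarith [hα.1, hα.2]) (by nlinarith [hα.1])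
  rw [powSum]
  linarith

lemma sub_five_fourths_mul_sq_le_one_sub_powSum (hk : 2 ≤ k) (hα : α ∈ Icc (0 : ℝ) 1) :
    k * α - 5 / 4 * (k * α) ^ 2 ≤ 1 - powSum k α := by
  have hk' : (2 : ℝ) ≤ k := by exact_mod_cast hk
  have hx : 0 ≤ k * α := mul_nonneg k.cast_nonneg hα.1
  have hα_sq : α ^ 2 ≤ (k * α) ^ 2 / 4 := by nlinarith [mul_le_mul_of_nonneg_right hk' hα.1, hα.1]
  have hinv : (1 + k * α)⁻¹ ≤ 1 - k * α + (k * α) ^ 2 := by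
    rw [inv_le_iff_one_le_mul₀ (by positivity)]
    nlinarith [pow_nonneg hx 3]
  linarith [powSum_le_inv_one_add_add_sq hk hα]

lemma one_add_pow_add_one_sub_pow_le (u : ℝ) (k : ℕ) :
    (1 + u) ^ k + (1 - u) ^ k ≤ 2 + k ^ 2 * u ^ 2 * (1 + |u|) ^ k := by
  induction k with
  | zero => norm_num
  | succ k ih =>
    have hmax : max |1 + u| |1 - u| ≤ 1 + |u| :=
      max_le ((abs_add_le _ _).trans_eq (by simp)) ((abs_sub _ _).trans_eq (by simp))
    have hone : 1 ≤ 1 + |u| := by linarith [abs_nonneg u]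
    have hdiff : u * ((1 + u) ^ k - (1 - u) ^ k) ≤ 2 * k * u ^ 2 * (1 + |u|) ^ k :=
      calc u * ((1 + u) ^ k - (1 - u) ^ k)
        _ ≤ |u| * |(1 + u) ^ k - (1 - u) ^ k| := by rw [← abs_mul]; exact le_abs_self _
        _ ≤ |u| * (|(1 + u) - (1 - u)| * k * max |1 + u| |1 - u| ^ (k - 1)) := by
          gcongr
          exact abs_pow_sub_pow_le ..
        _ = 2 * k * u ^ 2 * max |1 + u| |1 - u| ^ (k - 1) := by
          rw [show (1 + u) - (1 - u) = 2 * u by ring, abs_mul, abs_two, ← sq_abs u]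
          ring
        _ ≤ 2 * k * u ^ 2 * (1 + |u|) ^ k := by
          gcongr 2 * k * u ^ 2 * ?_
          exact (pow_le_pow_left₀ (by positivity) hmax _).trans
            (pow_le_pow_right₀ hone (Nat.sub_le k 1))
    calc (1 + u) ^ (k + 1) + (1 - u) ^ (k + 1)
      _ = (1 + u) ^ k + (1 - u) ^ k + u * ((1 + u) ^ k - (1 - u) ^ k) := by ring
      _ ≤ 2 + (k ^ 2 + 2 * k) * u ^ 2 * (1 + |u|) ^ k := by linarith
      _ ≤ 2 + (k + 1 : ℕ) ^ 2 * u ^ 2 * (1 + |u|) ^ (k + 1) := by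
        gcongr
        · push_cast
          linarith
        · exact k.le_succ

lemma powSum_sub_violationProb_le (k : ℕ) (α : ℝ) :
    powSum k α - violationProb k ≤ k ^ 2 * (1 - 2 * α) ^ 2 * ((1 + |1 - 2 * α|) / 2) ^ k := by
  have hsum : powSum k α = (1 / 2) ^ k * ((1 + (1 - 2 * α)) ^ k + (1 - (1 - 2 * α)) ^ k) := by
    rw [powSum, mul_add, ← mul_pow, ← mul_pow, add_comm]
    ring
  calc powSum k α - violationProb k
    _ = (1 / 2) ^ k * ((1 + (1 - 2 * α)) ^ k + (1 - (1 - 2 * α)) ^ k - 2) := by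
      rw [hsum, violationProb]
      ring
    _ ≤ (1 / 2) ^ k * (k ^ 2 * (1 - 2 * α) ^ 2 * (1 + |1 - 2 * α|) ^ k) := by
      gcongr
      linarith [one_add_pow_add_one_sub_pow_le (1 - 2 * α) k]
    _ = k ^ 2 * (1 - 2 * α) ^ 2 * ((1 + |1 - 2 * α|) / 2) ^ k := by
      rw [div_eq_mul_one_div (1 + _), mul_pow (1 + _)]
      ring

end PowSum

section Gr

variable {k : ℕ} {r α : ℝ}

lemma fN_eq (k : ℕ) (α : ℝ) :
    fN k α = (1 - violationProb k) ^ 2 + violationProb k * (powSum k α - violationProb k) := by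
  rw [fN, two_zpow_one_sub, two_zpow_two_sub, powSum]
  ring

lemma fN_half (k : ℕ) : fN k (1 / 2) = (1 - violationProb k) ^ 2 := by
  rw [fN_eq, powSum_half, sub_self, mul_zero, add_zero]

lemma fN_one_sub (k : ℕ) (α : ℝ) : fN k (1 - α) = fN k α := by
  rw [fN_eq, fN_eq, powSum_one_sub]

lemma fN_half_le (k : ℕ) (hα : α ∈ Icc (0 : ℝ) 1) : fN k (1 / 2) ≤ fN k α := by
  rw [fN_half, fN_eq]
  exact le_add_of_nonneg_right
    (mul_nonneg (violationProb_pos k).le (sub_nonneg.2 (violationProb_le_powSum k hα)))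

lemma fN_half_pos (hk : 2 ≤ k) : 0 < fN k (1 / 2) := by
  rw [fN_half]
  exact pow_pos (by linarith [violationProb_le_half hk]) 2

lemma fN_pos (hk : 2 ≤ k) (hα : α ∈ Icc (0 : ℝ) 1) : 0 < fN k α :=
  (fN_half_pos hk).trans_le (fN_half_le k hα)

lemma log_fN_sub_log_fN_half_le (hk : 2 ≤ k) (hα : α ∈ Icc (0 : ℝ) 1) :
    log (fN k α) - log (fN k (1 / 2)) ≤
      violationProb k * (powSum k α - violationProb k) / (1 - violationProb k) ^ 2 := by
  have tangent := log_le_log_add_sub_div (fN_half_pos hk) (fN_pos hk hα)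
  rw [fN_eq k α, fN_half, add_sub_cancel_left] at tangent
  rw [fN_eq k α, fN_half]
  linarith

lemma log_fN_sub_log_fN_half_le_neg_log_one_sub_sub (hk : 2 ≤ k) (hα : α ∈ Icc (0 : ℝ) 1) :
    log (fN k α) - log (fN k (1 / 2)) ≤
      -log (1 - violationProb k) - violationProb k * (1 - powSum k α) := by
  have hq := violationProb_pos k
  have hq_half := violationProb_le_half hk
  have hpos : 0 < 1 - violationProb k := by linarith
  have hs : 0 ≤ 1 - powSum k α := sub_nonneg.2 (powSum_le_one (by lia) hα)
  have tangent := log_le_log_add_sub_div hpos (fN_pos hk hα)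
  have hdiff : fN k α - (1 - violationProb k) = -(violationProb k * (1 - powSum k α)) := by
    rw [fN_eq]
    ring
  have hslope : violationProb k * (1 - powSum k α) ≤
      violationProb k * (1 - powSum k α) / (1 - violationProb k) :=
    le_div_self (by positivity) hpos (by linarith)
  rw [hdiff, neg_div] at tangent
  rw [fN_half, log_pow]
  push_cast
  linarith

lemma rpow_self_eq_exp_neg_negMulLog {x : ℝ} (hx : 0 ≤ x) : x ^ x = exp (-negMulLog x) := by
  obtain rfl | hx := hx.eq_or_lt
  · simp
  · rw [rpow_def_of_pos hx, negMulLog]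
    ring_nf

lemma gr_eq_exp (hk : 2 ≤ k) (r : ℝ) (hα : α ∈ Icc (0 : ℝ) 1) :
    gr k r α = exp (r * log (fN k α) + binEntropy α) := by
  rw [gr, rpow_self_eq_exp_neg_negMulLog hα.1,
    rpow_self_eq_exp_neg_negMulLog (sub_nonneg.2 hα.2), rpow_def_of_pos (fN_pos hk hα),
    ← exp_add, ← exp_sub, binEntropy_eq_negMulLog_add_negMulLog_one_sub]
  ring_nf

lemma gr_one_sub (k : ℕ) (r α : ℝ) : gr k r (1 - α) = gr k r α := by
  rw [gr, gr, fN_one_sub, sub_sub_cancel, mul_comm (α ^ α)]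

lemma gr_lt_gr_half_iff (hk : 2 ≤ k) (hα : α ∈ Icc (0 : ℝ) 1) :
    gr k r α < gr k r (1 / 2) ↔
      r * (log (fN k α) - log (fN k (1 / 2))) + binEntropy α < log 2 := by
  rw [gr_eq_exp hk r hα, gr_eq_exp hk r ⟨by norm_num, by norm_num⟩, exp_lt_exp,
    one_div, binEntropy_two_inv]
  constructor <;> intro h <;> linarith

/-- `fN k` is minimal at `1 / 2`, so raising `r` can only help the competitors of `1 / 2`. -/
lemma gr_lt_gr_half_of_le {R : ℝ} (hk : 2 ≤ k) (hα : α ∈ Icc (0 : ℝ) 1) (hrR : r ≤ R)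
    (hR : gr k R α < gr k R (1 / 2)) : gr k r α < gr k r (1 / 2) := by
  rw [gr_lt_gr_half_iff hk hα] at hR ⊢
  have hlog : 0 ≤ log (fN k α) - log (fN k (1 / 2)) :=
    sub_nonneg.2 (log_le_log (fN_half_pos hk) (fN_half_le k hα))
  linarith [mul_le_mul_of_nonneg_right hrR hlog]

end Gr

section Middle

lemma eventually_sq_mul_pow_lt {a c : ℝ} (ha : |a| < 1) (hc : 0 < c) :
    ∀ᶠ k : ℕ in atTop, (k : ℝ) ^ 2 * a ^ k < c :=
  (tendsto_pow_const_mul_const_pow_of_abs_lt_one 2 ha).eventually_lt_const hc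

lemma powSum_sub_violationProb_le_of_mem_Icc {η α : ℝ} (k : ℕ) (hα : α ∈ Icc η (1 - η)) :
    powSum k α - violationProb k ≤ (1 - 2 * α) ^ 2 * (k ^ 2 * (1 - η) ^ k) := by
  have hu : |1 - 2 * α| ≤ 1 - 2 * η := abs_le.2 ⟨by linarith [hα.2], by linarith [hα.1]⟩
  calc powSum k α - violationProb k
    _ ≤ k ^ 2 * (1 - 2 * α) ^ 2 * ((1 + |1 - 2 * α|) / 2) ^ k := powSum_sub_violationProb_le k α
    _ ≤ k ^ 2 * (1 - 2 * α) ^ 2 * (1 - η) ^ k := by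
      gcongr
      linarith
    _ = (1 - 2 * α) ^ 2 * (k ^ 2 * (1 - η) ^ k) := by ring

lemma eventually_gr_lt_gr_half_of_mem_Icc {η : ℝ} (hη : η ∈ Ioo (0 : ℝ) 1) :
    ∀ᶠ k : ℕ in atTop, ∀ α ∈ Icc η (1 - η), α ≠ 1 / 2 →
      gr k (log 2 / violationProb k) α < gr k (log 2 / violationProb k) (1 / 2) := by
  have hbase : |1 - η| < 1 := abs_lt.2 ⟨by linarith [hη.2], by linarith [hη.1]⟩
  filter_upwards [eventually_ge_atTop 2, eventually_sq_mul_pow_lt hbase (c := 1 / 24) (by norm_num)]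
    with k hk hdecay α hα hne
  have hα' : α ∈ Icc (0 : ℝ) 1 := ⟨hη.1.le.trans hα.1, by linarith [hα.2, hη.1]⟩
  have hq := violationProb_pos k
  have hq_sq : 1 / 4 ≤ (1 - violationProb k) ^ 2 := by nlinarith [violationProb_le_half hk]
  have hu_sq : 0 < (1 - 2 * α) ^ 2 := by
    have : 1 - 2 * α ≠ 0 := fun h ↦ hne (by linarith)
    positivity
  have hgap : powSum k α - violationProb k ≤ (1 - 2 * α) ^ 2 / 24 :=
    (powSum_sub_violationProb_le_of_mem_Icc k hα).trans (by nlinarith)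
  have henergy : log 2 / violationProb k * (log (fN k α) - log (fN k (1 / 2))) <
      (1 - 2 * α) ^ 2 / 6 :=
    calc log 2 / violationProb k * (log (fN k α) - log (fN k (1 / 2)))
      _ ≤ log 2 / violationProb k *
          (violationProb k * (powSum k α - violationProb k) / (1 - violationProb k) ^ 2) := by
        gcongr
        exact log_fN_sub_log_fN_half_le hk hα'
      _ = log 2 * ((powSum k α - violationProb k) / (1 - violationProb k) ^ 2) := by
        field_simp
      _ ≤ log 2 * ((1 - 2 * α) ^ 2 / 24 / (1 / 4)) := by gcongr
      _ < (1 - 2 * α) ^ 2 / 6 := by linarith [mul_lt_mul_of_pos_right log_two_lt_d9 hu_sq]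
  rw [gr_lt_gr_half_iff hk hα']
  linarith [binEntropy_le_log_two_sub_sq hα']

end Middle

section Endpoint

variable {k : ℕ} {α : ℝ}

lemma exp_neg_mul_log_two (k : ℕ) : exp (-(k * log 2)) = violationProb k / 2 := by
  rw [exp_neg, exp_nat_mul, exp_log two_pos, violationProb, one_div, inv_pow,
    mul_div_cancel_left₀ _ two_ne_zero]

lemma binEntropy_le_of_sq_mul_le {C η : ℝ} (hC : 0 ≤ C) (hk : 2 ≤ k)
    (hCq : C * violationProb k ≤ log 2) (hCη : 2 * C ^ 2 * violationProb k ≤ η)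
    (hα : α ∈ Icc (0 : ℝ) 1) (hkα : (k * α) ^ 2 ≤ η * violationProb k / 2) :
    binEntropy α ≤
      (1 / 2 + η) * violationProb k + (log 2 - C * violationProb k) * (1 - powSum k α) := by
  have hq := violationProb_pos k
  have hη : 0 ≤ η := hCη.trans' (by positivity)
  have hentropy : binEntropy α ≤ log 2 * (k * α) + violationProb k / 2 := by
    rw [← exp_neg_mul_log_two]
    linarith [binEntropy_le_mul_add_exp_neg hα (k * log 2)]
  have hgap : (log 2 - C * violationProb k) * (k * α - 5 / 4 * (k * α) ^ 2) ≤
      (log 2 - C * violationProb k) * (1 - powSum k α) :=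
    mul_le_mul_of_nonneg_left (sub_five_fourths_mul_sq_le_one_sub_powSum hk hα) (sub_nonneg.2 hCq)
  have hlin : C * (k * α) ≤ η / 2 := by
    refine le_of_abs_le (abs_le_of_sq_le_sq ?_ (by positivity))
    calc (C * (k * α)) ^ 2 = C ^ 2 * (k * α) ^ 2 := by ring
      _ ≤ C ^ 2 * (η * violationProb k / 2) := by gcongr
      _ = 2 * C ^ 2 * violationProb k * η / 4 := by ring
      _ ≤ η * η / 4 := by gcongr
      _ = (η / 2) ^ 2 := by ring
  have hlin' : C * (k * α) * violationProb k ≤ η / 2 * violationProb k := by gcongr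
  have hlog : log 2 * (5 / 4 * (k * α) ^ 2) ≤ (k * α) ^ 2 := by
    nlinarith [log_two_lt_d9, sq_nonneg (k * α)]
  have hdrop : 0 ≤ C * violationProb k * (5 / 4 * (k * α) ^ 2) := by positivity
  linarith

lemma binEntropy_le_of_exp_neg_le {A : ℝ} (hA : 2 / 3 ≤ A) (hk : 40 ≤ k)
    (hα : α ∈ Icc (0 : ℝ) 1) (hexp : exp (-(k / 2)) ≤ α) (hkα : k * α ≤ 1 / 8) :
    binEntropy α ≤ A * (1 - powSum k α) := by
  have hk' : (40 : ℝ) ≤ k := by exact_mod_cast hk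
  have hα_le : α ≤ k * α / 40 := by nlinarith [hα.1]
  have hx : 0 ≤ k * α := mul_nonneg k.cast_nonneg hα.1
  have hgap : 27 / 32 * (k * α) ≤ 1 - powSum k α := by
    nlinarith [sub_five_fourths_mul_sq_le_one_sub_powSum (k := k) (by lia) hα]
  calc binEntropy α ≤ α * (k / 2) + exp (-(k / 2)) := binEntropy_le_mul_add_exp_neg hα _
    _ ≤ 2 / 3 * (27 / 32 * (k * α)) := by linarith
    _ ≤ A * (1 - powSum k α) := by gcongr

lemma binEntropy_le_of_one_eighth_le_mul {A : ℝ} (hA : 2 / 3 ≤ A) (hk : 2 ≤ k)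
    (hα : α ∈ Icc (0 : ℝ) (1 / 100)) (hkα : 1 / 8 ≤ k * α) :
    binEntropy α ≤ A * (1 - powSum k α) := by
  have hα' : α ∈ Icc (0 : ℝ) 1 := ⟨hα.1, hα.2.trans (by norm_num)⟩
  have hgap : 1 / 10 ≤ 1 - powSum k α := by
    have hinv : (1 + k * α)⁻¹ ≤ (1 + 1 / 8 : ℝ)⁻¹ := by gcongr
    have hsq : α ^ 2 ≤ (1 / 100) ^ 2 := pow_le_pow_left₀ hα.1 hα.2 2
    linarith [powSum_le_inv_one_add_add_sq hk hα']
  have hlog : log 64 ≤ 4.2 := by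
    rw [show (64 : ℝ) = 2 ^ 6 by norm_num, log_pow]
    push_cast
    linarith [log_two_lt_d9]
  calc binEntropy α ≤ α * log 64 + exp (-log 64) := binEntropy_le_mul_add_exp_neg hα' _
    _ ≤ 1 / 100 * 4.2 + 1 / 64 := by
      rw [exp_neg, exp_log (by norm_num), ← one_div]
      gcongr
      exact hα.2
    _ ≤ 2 / 3 * (1 / 10) := by norm_num
    _ ≤ A * (1 - powSum k α) := by gcongr

lemma eventually_mul_violationProb_le (C : ℝ) {c : ℝ} (hc : 0 < c) :
    ∀ᶠ k : ℕ in atTop, C * violationProb k ≤ c := by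
  have h : Tendsto (fun k ↦ C * violationProb k) atTop (𝓝 0) := by
    simpa only [mul_zero] using tendsto_violationProb.const_mul C
  exact h.eventually_le_const hc

lemma eventually_sq_mul_exp_neg_half_le {η : ℝ} (hη : 0 < η) :
    ∀ᶠ k : ℕ in atTop, (k * exp (-(k / 2))) ^ 2 ≤ η * violationProb k / 2 := by
  have hbase : |2 * exp (-1)| < 1 := by
    rw [abs_of_pos (by positivity), exp_neg, ← div_eq_mul_inv, div_lt_one (exp_pos 1)]
    linarith [exp_one_gt_d9]
  filter_upwards [eventually_sq_mul_pow_lt hbase hη] with k hk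
  calc (k * exp (-(k / 2))) ^ 2 = k ^ 2 * exp (-1) ^ k := by
        rw [mul_pow, ← exp_nat_mul, ← exp_nat_mul]
        push_cast
        ring_nf
    _ = k ^ 2 * (2 * exp (-1)) ^ k * (1 / 2) ^ k := by
        rw [mul_assoc, ← mul_pow]
        ring_nf
    _ ≤ η * (1 / 2) ^ k := by gcongr
    _ = η * violationProb k / 2 := by rw [violationProb]; ring

/-- Over the line of slope `k * log 2` the entropy gains at most `violationProb k / 2`, attained
near `α = 2 ^ (-k)`: this is the term `1 / 2` in the threshold for `r`. -/
lemma eventually_binEntropy_le {C η : ℝ} (hC : 0 ≤ C) (hη : 0 < η) :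
    ∀ᶠ k : ℕ in atTop, ∀ α ∈ Icc (0 : ℝ) (1 / 100), binEntropy α ≤
      (1 / 2 + η) * violationProb k + (log 2 - C * violationProb k) * (1 - powSum k α) := by
  filter_upwards [eventually_ge_atTop 40, eventually_mul_violationProb_le C (c := 1 / 50)
    (by norm_num), eventually_mul_violationProb_le (2 * C ^ 2) hη,
    eventually_sq_mul_exp_neg_half_le hη] with k hk hCq hCη hexp_sq α hα
  have hα' : α ∈ Icc (0 : ℝ) 1 := ⟨hα.1, hα.2.trans (by norm_num)⟩
  have hslope : 2 / 3 ≤ log 2 - C * violationProb k := by linarith [log_two_gt_d9]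
  have hslack : 0 ≤ (1 / 2 + η) * violationProb k :=
    mul_nonneg (by positivity) (violationProb_pos k).le
  rcases le_total α (exp (-(k / 2))) with htiny | hexp
  · have hkα : (k * α) ^ 2 ≤ η * violationProb k / 2 :=
      (pow_le_pow_left₀ (mul_nonneg k.cast_nonneg hα.1) (by gcongr) 2).trans hexp_sq
    exact binEntropy_le_of_sq_mul_le hC (by lia) (by linarith) hCη hα' hkα
  refine le_add_of_nonneg_of_le hslack ?_
  rcases le_total (k * α) (1 / 8) with hkα | hkα
  · exact binEntropy_le_of_exp_neg_le hslope hk hα' hexp hkα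
  · exact binEntropy_le_of_one_eighth_le_mul hslope (by lia) hα hkα

/-- The second-order term of `-log (1 - violationProb k)` is the term `log 2 / 2` in the threshold
for `r`. -/
lemma mul_log_fN_sub_log_fN_half_le {C : ℝ} (hC : 0 ≤ C) (hk : 2 ≤ k)
    (hCq : C * violationProb k ≤ log 2) (hα : α ∈ Icc (0 : ℝ) 1) :
    (log 2 / violationProb k - C) * (log (fN k α) - log (fN k (1 / 2))) ≤
      log 2 + (log 2 / 2 - C) * violationProb k + 2 * log 2 * violationProb k ^ 2 -
        (log 2 - C * violationProb k) * (1 - powSum k α) := by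
  have hlog_ratio := log_fN_sub_log_fN_half_le_neg_log_one_sub_sub hk hα
  have htaylor := neg_log_one_sub_le (violationProb_pos k).le (violationProb_le_half hk)
  have hq := violationProb_pos k
  set q := violationProb k
  have hR : 0 ≤ log 2 / q - C := sub_nonneg.2 ((le_div_iff₀ hq).2 hCq)
  calc (log 2 / q - C) * (log (fN k α) - log (fN k (1 / 2)))
    _ ≤ (log 2 / q - C) * (q + q ^ 2 / 2 + 2 * q ^ 3 - q * (1 - powSum k α)) :=
      mul_le_mul_of_nonneg_left (by linarith) hR
    _ = log 2 + (log 2 / 2 - C) * q + 2 * log 2 * q ^ 2 - C * (q ^ 2 / 2 + 2 * q ^ 3) -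
        (log 2 - C * q) * (1 - powSum k α) := by
      field_simp
      ring
    _ ≤ _ := by
      have : 0 ≤ C * (q ^ 2 / 2 + 2 * q ^ 3) := by positivity
      linarith

lemma eventually_gr_lt_gr_half_of_le_one_hundredth {ε : ℝ} (hε : 0 < ε) :
    ∀ᶠ k : ℕ in atTop, ∀ α ∈ Icc (0 : ℝ) (1 / 100),
      gr k (log 2 / violationProb k - (log 2 / 2 + 1 / 2 + ε)) α <
        gr k (log 2 / violationProb k - (log 2 / 2 + 1 / 2 + ε)) (1 / 2) := by
  have hC : 0 ≤ log 2 / 2 + 1 / 2 + ε := by positivity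
  filter_upwards [eventually_ge_atTop 2, eventually_binEntropy_le hC (half_pos hε),
    eventually_mul_violationProb_le 4 hε,
    eventually_mul_violationProb_le (log 2 / 2 + 1 / 2 + ε) (log_pos one_lt_two)]
    with k hk hentropy hqε hCq α hα
  have hα' : α ∈ Icc (0 : ℝ) 1 := ⟨hα.1, hα.2.trans (by norm_num)⟩
  have hq := violationProb_pos k
  have henergy := mul_log_fN_sub_log_fN_half_le hC hk hCq hα'
  have hquad : 2 * log 2 * violationProb k ^ 2 < ε / 2 * violationProb k := by
    nlinarith [log_two_lt_d9]
  rw [gr_lt_gr_half_iff hk hα']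
  linarith [hentropy α hα]

end Endpoint

section SecondDerivative

lemma deriv_deriv_exp_of_hasDerivAt {φ φ' : ℝ → ℝ} {φ'' x : ℝ}
    (hφ : ∀ᶠ y in 𝓝 x, HasDerivAt φ (φ' y) y) (hφ' : HasDerivAt φ' φ'' x) (hcrit : φ' x = 0) :
    deriv (deriv fun y ↦ exp (φ y)) x = exp (φ x) * φ'' := by
  have hderiv : deriv (fun y ↦ exp (φ y)) =ᶠ[𝓝 x] fun y ↦ exp (φ y) * φ' y :=
    hφ.mono fun y hy ↦ hy.exp.deriv
  rw [hderiv.deriv_eq, (hφ.self_of_nhds.exp.fun_mul hφ').deriv, hcrit]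
  ring

variable {k : ℕ}

lemma hasDerivAt_powSum (k : ℕ) (α : ℝ) :
    HasDerivAt (powSum k) (k * (α ^ (k - 1) - (1 - α) ^ (k - 1))) α := by
  refine ((hasDerivAt_pow k α).fun_add
    (((hasDerivAt_id α).const_sub 1).fun_pow k)).congr_deriv ?_
  simp only [id]
  ring

lemma hasDerivAt_fN (k : ℕ) (α : ℝ) :
    HasDerivAt (fN k) (violationProb k * (k * (α ^ (k - 1) - (1 - α) ^ (k - 1)))) α := by
  rw [funext (fN_eq k)]
  exact (((hasDerivAt_powSum k α).sub_const _).const_mul _).const_add _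

lemma hasDerivAt_deriv_fN_half (hk : 2 ≤ k) :
    HasDerivAt (fun α ↦ violationProb k * (k * (α ^ (k - 1) - (1 - α) ^ (k - 1))))
      (4 * k * (k - 1) * violationProb k ^ 2) (1 / 2) := by
  obtain ⟨m, rfl⟩ := Nat.exists_eq_add_of_le' hk
  refine ((((hasDerivAt_pow (m + 1) (1 / 2 : ℝ)).fun_sub
    (((hasDerivAt_id (1 / 2 : ℝ)).const_sub 1).fun_pow (m + 1))).const_mul
      ((m + 2 : ℕ) : ℝ)).const_mul (violationProb (m + 2))).congr_deriv ?_
  simp only [id, sub_half, Nat.add_sub_cancel, violationProb]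
  push_cast
  ring

lemma hasDerivAt_log_gr {α : ℝ} (hk : 2 ≤ k) (r : ℝ) (hα : α ∈ Ioo (0 : ℝ) 1) :
    HasDerivAt (fun α ↦ r * log (fN k α) + binEntropy α)
      (r * (violationProb k * (k * (α ^ (k - 1) - (1 - α) ^ (k - 1))) / fN k α) +
        (log (1 - α) - log α)) α :=
  (((hasDerivAt_fN k α).log (fN_pos hk (Ioo_subset_Icc_self hα)).ne').const_mul r).fun_add
    (hasDerivAt_binEntropy hα.1.ne' hα.2.ne)

lemma hasDerivAt_deriv_log_gr_half (hk : 2 ≤ k) (r : ℝ) :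
    HasDerivAt (fun α ↦ r * (violationProb k * (k * (α ^ (k - 1) - (1 - α) ^ (k - 1))) / fN k α) +
        (log (1 - α) - log α))
      (r * (4 * k * (k - 1) * violationProb k ^ 2 / (1 - violationProb k) ^ 2) - 4) (1 / 2) := by
  have hf := (fN_half_pos hk).ne'
  have henergy := ((hasDerivAt_deriv_fN_half hk).fun_div (hasDerivAt_fN k (1 / 2)) hf).const_mul r
  have hentropy := (((hasDerivAt_id (1 / 2 : ℝ)).const_sub 1).log (by norm_num)).fun_sub
    ((hasDerivAt_id (1 / 2 : ℝ)).log (by norm_num))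
  refine (henergy.fun_add hentropy).congr_deriv ?_
  rw [← fN_half, sub_half, sub_self]
  simp only [id, sub_half, mul_zero, sub_zero]
  field_simp
  ring

lemma deriv_deriv_gr_half (hk : 2 ≤ k) (r : ℝ) :
    deriv (deriv (gr k r)) (1 / 2) = gr k r (1 / 2) *
      (r * (4 * k * (k - 1) * violationProb k ^ 2 / (1 - violationProb k) ^ 2) - 4) := by
  have hnhds : Ioo (0 : ℝ) 1 ∈ 𝓝 (1 / 2) := Ioo_mem_nhds (by norm_num) (by norm_num)
  have hexp : gr k r =ᶠ[𝓝 (1 / 2)] fun α ↦ exp (r * log (fN k α) + binEntropy α) := by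
    filter_upwards [hnhds] with α hα using gr_eq_exp hk r (Ioo_subset_Icc_self hα)
  rw [hexp.deriv.deriv_eq, hexp.self_of_nhds]
  refine deriv_deriv_exp_of_hasDerivAt ?_ (hasDerivAt_deriv_log_gr_half hk r) ?_
  · filter_upwards [hnhds] with α hα using hasDerivAt_log_gr hk r hα
  · rw [sub_half]; simp

lemma eventually_deriv_deriv_gr_half_neg :
    ∀ᶠ k : ℕ in atTop, ∀ r ≤ log 2 / violationProb k, deriv (deriv (gr k r)) (1 / 2) < 0 := by
  filter_upwards [eventually_ge_atTop 2, eventually_sq_mul_pow_lt (a := 1 / 2) (c := 1 / 8)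
    (by norm_num [abs_of_pos]) (by norm_num)] with k hk hdecay r hr
  have hk' : (2 : ℝ) ≤ k := by exact_mod_cast hk
  have hq := violationProb_pos k
  have hq_sq : 1 / 4 ≤ (1 - violationProb k) ^ 2 := by nlinarith [violationProb_le_half hk]
  have hkq : k * (k - 1) * violationProb k ≤ 1 / 4 :=
    calc k * (k - 1) * violationProb k ≤ k * k * violationProb k := by gcongr; linarith
      _ = 2 * (k ^ 2 * (1 / 2) ^ k) := by rw [violationProb]; ring
      _ ≤ 1 / 4 := by linarith
  have hcurv : r * (4 * k * (k - 1) * violationProb k ^ 2 / (1 - violationProb k) ^ 2) < 4 :=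
    calc r * (4 * k * (k - 1) * violationProb k ^ 2 / (1 - violationProb k) ^ 2)
      _ ≤ log 2 / violationProb k *
          (4 * k * (k - 1) * violationProb k ^ 2 / (1 - violationProb k) ^ 2) := by
        have : (0 : ℝ) ≤ k - 1 := by linarith
        gcongr
      _ = 4 * log 2 * (k * (k - 1) * violationProb k / (1 - violationProb k) ^ 2) := by
        field_simp
      _ ≤ 4 * log 2 * (1 / 4 / (1 / 4)) := by gcongr
      _ < 4 := by linarith [log_two_lt_d9]
  have hgr : 0 < gr k r (1 / 2) := by
    rw [gr_eq_exp hk r ⟨by norm_num, by norm_num⟩]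
    exact exp_pos _
  rw [deriv_deriv_gr_half hk r]
  exact mul_neg_of_pos_of_neg hgr (sub_neg.2 hcurv)

end SecondDerivative

theorem gr_max_at_half_general (ε : ℝ) (hε : 0 < ε) :
    ∃ k₀ : ℕ, ∀ k : ℕ, k₀ ≤ k → ∀ r : ℝ,
      r < (2 : ℝ) ^ ((k : ℤ) - 1) * Real.log 2 - Real.log 2 / 2 - 1 / 2 - ε →
      (∀ α ∈ Set.Icc (0 : ℝ) 1, α ≠ 1 / 2 → gr k r α < gr k r (1 / 2)) ∧
        deriv (deriv (gr k r)) (1 / 2) < 0 := by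
  have hmiddle := eventually_gr_lt_gr_half_of_mem_Icc (η := 1 / 100) ⟨by norm_num, by norm_num⟩
  obtain ⟨k₀, hk₀⟩ := eventually_atTop.1 ((eventually_ge_atTop 2).and
    ((eventually_gr_lt_gr_half_of_le_one_hundredth hε).and
      (hmiddle.and eventually_deriv_deriv_gr_half_neg)))
  refine ⟨k₀, fun k hk r hr ↦ ?_⟩
  obtain ⟨hk₂, endpoint, middle, curvature⟩ := hk₀ k hk
  rw [two_zpow_sub_one, inv_mul_eq_div] at hr
  have hr_endpoint : r ≤ log 2 / violationProb k - (log 2 / 2 + 1 / 2 + ε) := by linarith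
  have hr_middle : r ≤ log 2 / violationProb k := by linarith [log_pos one_lt_two]
  refine ⟨fun α hα hne ↦ ?_, curvature r hr_middle⟩
  rcases le_total α (1 / 100) with hleft | hleft
  · exact gr_lt_gr_half_of_le hk₂ hα hr_endpoint (endpoint α ⟨hα.1, hleft⟩)
  rcases le_total α (1 - 1 / 100) with hright | hright
  · exact gr_lt_gr_half_of_le hk₂ hα hr_middle (middle α ⟨hleft, hright⟩ hne)
  · rw [← gr_one_sub k r α]
    exact gr_lt_gr_half_of_le hk₂ ⟨by linarith [hα.2], by linarith [hα.1]⟩ hr_endpoint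
      (endpoint (1 - α) ⟨by linarith [hα.2], by linarith⟩)

/-- For every `ε > 0` there is `k₀` such that for all `k ≥ k₀` and
`0 < r < 2^(k-1) ln 2 - (ln 2)/2 - 1/2 - ε`, the function `g_r` is strictly maximized
at `1/2` on `[0,1]` and `g_r''(1/2) < 0`. -/
theorem gr_max_at_half (ε : ℝ) (hε : 0 < ε) :
    ∃ k₀ : ℕ, ∀ k : ℕ, k₀ ≤ k → ∀ r : ℝ, 0 < r →
      r < (2 : ℝ) ^ ((k : ℤ) - 1) * Real.log 2 - Real.log 2 / 2 - 1 / 2 - ε →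
      (∀ α ∈ Set.Icc (0 : ℝ) 1, α ≠ 1 / 2 → gr k r α < gr k r (1 / 2)) ∧
        deriv (deriv (gr k r)) (1 / 2) < 0 :=
  let ⟨k₀, hk₀⟩ := gr_max_at_half_general ε hε
  ⟨k₀, fun k hk r _ hr ↦ hk₀ k hk r hr⟩
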